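/- Let 2 ≤ n ≤ l and let (A, B) be a pair of nonempty subsets of Fin n with A ∪ B = Fin n, |A \ B| = k1 and |B \ A| = k2. Then there exist irreducible algebraic sets Y_1, …, Y_m with Y_i ⊄ Y_j for all i ≠ j such that V(A,B) = Y_1 ∪ … ∪ Y_m and m = (n − k1 − k2) · (n − 1)! + k1 · k2 · (n − 2)!; moreover, any collection of irreducible algebraic sets which are pairwise not contained in one another and whose union is V(A,B) has exactly m members. -/

import Mathlib

/-- The solution set of the equation given by the pair (A, B) of nonempty subsets of `Fin n`:
points `P : Fin n → Fin l` with `min_{i ∈ A} P i = min_{j ∈ B} P j`. -/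
def solutionSet {n : ℕ} (l : ℕ) (A B : Finset (Fin n)) (hA : A.Nonempty) (hB : B.Nonempty) :
    Set (Fin n → Fin l) :=
  {P | A.inf' hA P = B.inf' hB P}

/-- A set of points is algebraic if it is the intersection of the solution sets of some
family of equations (pairs of nonempty subsets of `Fin n`). -/
def IsAlgebraicSet (n l : ℕ) (Y : Set (Fin n → Fin l)) : Prop :=
  ∃ (I : Type) (A B : I → Finset (Fin n)) (hA : ∀ i, (A i).Nonempty)
    (hB : ∀ i, (B i).Nonempty), Y = ⋂ i, solutionSet l (A i) (B i) (hA i) (hB i)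

/-- An algebraic set `Y` is irreducible if whenever `Y = Y₁ ∪ … ∪ Yₘ` with each `Yᵢ`
algebraic, then `Y = Yᵢ` for some `i`. -/
def IsIrreducibleAlg (n l : ℕ) (Y : Set (Fin n → Fin l)) : Prop :=
  ∀ (m : ℕ) (Z : Fin m → Set (Fin n → Fin l)),
    (∀ i, IsAlgebraicSet n l (Z i)) → Y = ⋃ i, Z i → ∃ i, Y = Z i

/-- The closure of a point. -/
def ptCl {n l : ℕ} (P : Fin n → Fin l) : Set (Fin n → Fin l) :=
  {Q | ∀ i j, P i ≤ P j → Q i ≤ Q j}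

theorem mem_ptCl_self {n l : ℕ} (P : Fin n → Fin l) : P ∈ ptCl P := fun _ _ h => h

theorem ptCl_sub_iff {n l : ℕ} (P Q : Fin n → Fin l) : ptCl P ⊆ ptCl Q ↔ P ∈ ptCl Q :=
  ⟨fun h => h (mem_ptCl_self P), fun h _ hR i j hij => hR i j (h i j hij)⟩

theorem mem_sol_iff {n l : ℕ} (A B : Finset (Fin n)) (hA : A.Nonempty) (hB : B.Nonempty)
    (P : Fin n → Fin l) : P ∈ solutionSet l A B hA hB ↔
      ∃ a ∈ A, ∃ b ∈ B, P a = P b ∧ (∀ i ∈ A, P a ≤ P i) ∧ ∀ i ∈ B, P b ≤ P i := by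
  constructor
  · intro h
    obtain ⟨a, ha, ha'⟩ := Finset.exists_mem_eq_inf' hA P
    obtain ⟨b, hb, hb'⟩ := Finset.exists_mem_eq_inf' hB P
    have h : A.inf' hA P = B.inf' hB P := h
    refine ⟨a, ha, b, hb, by rw [← ha', ← hb', h], fun i hi => ?_, fun i hi => ?_⟩
    · rw [← ha']; exact Finset.inf'_le P hi
    · rw [← hb']; exact Finset.inf'_le P hi
  · rintro ⟨a, ha, b, hb, hab, h1, h2⟩
    have e1 : A.inf' hA P = P a :=
      le_antisymm (Finset.inf'_le P ha) (Finset.le_inf' hA P h1)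
    have e2 : B.inf' hB P = P b :=
      le_antisymm (Finset.inf'_le P hb) (Finset.le_inf' hB P h2)
    show A.inf' hA P = B.inf' hB P
    rw [e1, e2, hab]

theorem ptCl_sub_sol {n l : ℕ} (A B : Finset (Fin n)) (hA : A.Nonempty) (hB : B.Nonempty)
    (P : Fin n → Fin l) (h : P ∈ solutionSet l A B hA hB) :
    ptCl P ⊆ solutionSet l A B hA hB := by
  intro Q hQ
  rw [mem_sol_iff] at h ⊢
  obtain ⟨a, ha, b, hb, hab, h1, h2⟩ := h
  exact ⟨a, ha, b, hb, le_antisymm (hQ _ _ hab.le) (hQ _ _ hab.ge),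
    fun i hi => hQ _ _ (h1 i hi), fun i hi => hQ _ _ (h2 i hi)⟩

theorem ptCl_sub_alg {n l : ℕ} {Z : Set (Fin n → Fin l)} (hZ : IsAlgebraicSet n l Z)
    (P : Fin n → Fin l) (h : P ∈ Z) : ptCl P ⊆ Z := by
  obtain ⟨I, A, B, hA, hB, rfl⟩ := hZ
  rw [Set.mem_iInter] at h
  exact Set.subset_iInter fun i => ptCl_sub_sol _ _ _ _ P (h i)

theorem ptCl_alg {n l : ℕ} (P : Fin n → Fin l) : IsAlgebraicSet n l (ptCl P) := by
  refine ⟨{p : Fin n × Fin n // P p.1 ≤ P p.2}, fun p => {p.1.1}, fun p => {p.1.1, p.1.2},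
    fun p => by simp, fun p => by simp, ?_⟩
  ext Q
  simp only [Set.mem_iInter, solutionSet, Set.mem_ofPred_eq, ptCl]
  constructor
  · rintro h ⟨⟨i, j⟩, hij⟩
    have := h i j hij
    simpa using this
  · intro h i j hij
    have := h ⟨⟨i, j⟩, hij⟩
    simpa using this

theorem ptCl_irr {n l : ℕ} (P : Fin n → Fin l) : IsIrreducibleAlg n l (ptCl P) := by
  intro m Z hZ h
  have hP := mem_ptCl_self P
  rw [h, Set.mem_iUnion] at hP
  obtain ⟨i, hi⟩ := hP
  refine ⟨i, (ptCl_sub_alg (hZ i) P hi).antisymm ?_⟩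
  rw [h]; exact Set.subset_iUnion Z i

theorem alg_inter {n l : ℕ} {Y Z : Set (Fin n → Fin l)} (hY : IsAlgebraicSet n l Y)
    (hZ : IsAlgebraicSet n l Z) : IsAlgebraicSet n l (Y ∩ Z) := by
  obtain ⟨I, A, B, hA, hB, rfl⟩ := hY
  obtain ⟨J, C, D, hC, hD, rfl⟩ := hZ
  refine ⟨I ⊕ J, Sum.elim A C, Sum.elim B D, ?_, ?_, ?_⟩
  · rintro (i | i) <;> simp [hA, hC]
  · rintro (i | i) <;> simp [hB, hD]
  · ext Q
    simp [Set.mem_iInter, Sum.forall]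

theorem irr_sub {n l k : ℕ} {Y : Set (Fin n → Fin l)} (hY : IsAlgebraicSet n l Y)
    (hi : IsIrreducibleAlg n l Y) (Z : Fin k → Set (Fin n → Fin l))
    (hZ : ∀ i, IsAlgebraicSet n l (Z i)) (h : Y ⊆ ⋃ i, Z i) : ∃ i, Y ⊆ Z i := by
  obtain ⟨i, h⟩ := hi k (fun i => Y ∩ Z i) (fun i => alg_inter hY (hZ i))
    (by rw [← Set.inter_iUnion, Set.inter_eq_left.2 h])
  exact ⟨i, Set.inter_eq_left.1 h.symm⟩

theorem comp_unique {n l k m : ℕ} (Y : Fin m → Set (Fin n → Fin l))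
    (Z : Fin k → Set (Fin n → Fin l))
    (hY : ∀ i, IsAlgebraicSet n l (Y i) ∧ IsIrreducibleAlg n l (Y i))
    (hY' : ∀ i j, i ≠ j → ¬ Y i ⊆ Y j)
    (hZ : ∀ i, IsAlgebraicSet n l (Z i) ∧ IsIrreducibleAlg n l (Z i))
    (hZ' : ∀ i j, i ≠ j → ¬ Z i ⊆ Z j) (h : (⋃ i, Z i) = ⋃ i, Y i) : k = m := by
  have h1 : ∀ i, ∃ j, Y i ⊆ Z j := fun i => irr_sub (hY i).1 (hY i).2 Z (fun j => (hZ j).1)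
    (by rw [h]; exact Set.subset_iUnion Y i)
  have h2 : ∀ i, ∃ j, Z i ⊆ Y j := fun i => irr_sub (hZ i).1 (hZ i).2 Y (fun j => (hY j).1)
    (by rw [← h]; exact Set.subset_iUnion Z i)
  choose f hf using h1
  choose g hg using h2
  have e : Fin k ≃ Fin m :=
    { toFun := g
      invFun := f
      left_inv := fun i => by
        by_contra hne
        exact hZ' i (f (g i)) (Ne.symm hne) ((hg i).trans (hf _))
      right_inv := fun i => by
        by_contra hne
        exact hY' i (g (f i)) (Ne.symm hne) ((hf i).trans (hg _)) }
  simpa using Fintype.card_congr e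

/-- Generic points of the first kind. -/
def gen1 {N l : ℕ} (hl : N + 2 ≤ l) (τ : Equiv.Perm (Fin (N + 2))) : Fin (N + 2) → Fin l :=
  fun i => ⟨(τ.symm i).val, by omega⟩

/-- Generic points of the second kind. -/
def gen2 {N l : ℕ} (hl : N + 2 ≤ l) (τ : Equiv.Perm (Fin (N + 2))) : Fin (N + 2) → Fin l :=
  fun i => ⟨max (τ.symm i).val 1, by omega⟩

theorem perm_eq_of_mono {n : ℕ} (σ τ : Equiv.Perm (Fin n))
    (h : ∀ x y, x < y → σ.symm (τ x) ≤ σ.symm (τ y)) : σ = τ := by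
  have hm : StrictMono (fun x => σ.symm (τ x)) := fun x y hxy =>
    lt_of_le_of_ne (h x y hxy) (fun he => hxy.ne (τ.injective (σ.symm.injective he)))
  have hs : Function.Surjective (fun x => σ.symm (τ x)) := (τ.trans σ.symm).surjective
  ext x
  have := (StrictMono.range_inj (f := fun x => σ.symm (τ x)) (g := fun x => x) hm strictMono_id).1
    (by rw [hs.range_eq]; exact (Set.range_id).symm)
  have := congrFun this x
  rw [Equiv.symm_apply_eq] at this
  rw [this]

theorem gen11 {N l : ℕ} (hl : N + 2 ≤ l) (σ τ : Equiv.Perm (Fin (N + 2)))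
    (h : gen1 hl σ ∈ ptCl (gen1 hl τ)) : σ = τ := by
  apply perm_eq_of_mono
  intro x y hxy
  have := h (τ x) (τ y)
  simp only [gen1, Fin.mk_le_mk, Equiv.symm_apply_apply, Fin.val_fin_le] at this
  exact this hxy.le

theorem gen12 {N l : ℕ} (hl : N + 2 ≤ l) (σ τ : Equiv.Perm (Fin (N + 2)))
    (h : gen1 hl σ ∈ ptCl (gen2 hl τ)) : False := by
  have h1 := h (τ 0) (τ 1)
  have h2 := h (τ 1) (τ 0)
  simp [gen1, gen2] at h1 h2
  have := τ.injective (σ.symm.injective (le_antisymm h1 h2))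
  simp at this

theorem gen2_min {N l : ℕ} (hl : N + 2 ≤ l) (σ : Equiv.Perm (Fin (N + 2))) (i : Fin (N + 2))
    (h : ∀ j, gen2 hl σ i ≤ gen2 hl σ j) : i = σ 0 ∨ i = σ 1 := by
  have := h (σ 0)
  simp only [gen2, Fin.mk_le_mk, Equiv.symm_apply_apply, Fin.val_zero] at this
  rw [← Equiv.symm_apply_eq, ← Equiv.symm_apply_eq, Fin.ext_iff, Fin.ext_iff]
  simp only [Fin.val_zero, Fin.val_one]
  omega

theorem gen22 {N l : ℕ} (hl : N + 2 ≤ l) (σ τ : Equiv.Perm (Fin (N + 2)))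
    (S T : Finset (Fin (N + 2))) (hST : Disjoint S T)
    (hσ : σ 0 ∈ S ∧ σ 1 ∈ T) (hτ : τ 0 ∈ S ∧ τ 1 ∈ T)
    (h : gen2 hl σ ∈ ptCl (gen2 hl τ)) : σ = τ := by
  have hd := Finset.disjoint_left.1 hST
  have h0 : τ 0 = σ 0 := by
    rcases gen2_min hl σ (τ 0) (fun j => h _ _ (by simp [gen2, Fin.le_def])) with e | e
    · exact e
    · exact absurd hσ.2 (e ▸ hd hτ.1)
  have h1 : τ 1 = σ 1 := by
    rcases gen2_min hl σ (τ 1) (fun j => h _ _ (by simp [gen2, Fin.le_def])) with e | e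
    · exact absurd hτ.2 (e ▸ hd hσ.1)
    · exact e
  apply perm_eq_of_mono
  intro x y hxy
  have hh := h (τ x) (τ y)
  simp only [gen2, Fin.mk_le_mk, Equiv.symm_apply_apply] at hh
  have hh := hh (by have := Fin.lt_def.1 hxy; omega)
  by_cases hx : x = 0
  · subst hx; rw [h0]; simp
  have hy0 : σ.symm (τ y) ≠ 0 := by
    rw [Ne, Equiv.symm_apply_eq, ← h0]
    exact fun e => by
      have := τ.injective e
      subst this
      exact absurd hxy (by simp)
  rw [Fin.le_def]
  have : (σ.symm (τ y)).val ≠ 0 := fun e => hy0 (Fin.ext e)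
  omega

theorem sort_lem {n : ℕ} (f : Fin n → ℕ) : ∃ τ : Equiv.Perm (Fin n),
    ∀ i j, τ.symm i ≤ τ.symm j → f i ≤ f j := by
  refine ⟨Tuple.sort f, fun i j h => ?_⟩
  have := Tuple.monotone_sort f h
  simpa using this

theorem exists_gen1 {N l : ℕ} (hl : N + 2 ≤ l) (P : Fin (N + 2) → Fin l) (a : Fin (N + 2))
    (ha : ∀ i, P a ≤ P i) : ∃ τ : Equiv.Perm (Fin (N + 2)), τ 0 = a ∧ P ∈ ptCl (gen1 hl τ) := by
  obtain ⟨τ, hτ⟩ := sort_lem (fun i => if i = a then 0 else (P i).val + 1)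
  refine ⟨τ, ?_, fun i j h => ?_⟩
  · have := hτ (τ 0) a (by simp)
    by_contra hne
    simp [hne] at this
  · have h1 := hτ i j (by simpa [gen1] using h)
    by_cases hi : i = a
    · subst hi; exact ha j
    · by_cases hj : j = a
      · simp [hi, hj] at h1
      · simpa [hi, hj] using h1

theorem exists_gen2 {N l : ℕ} (hl : N + 2 ≤ l) (P : Fin (N + 2) → Fin l) (a b : Fin (N + 2))
    (hne : a ≠ b) (ha : ∀ i, P a ≤ P i) (hb : ∀ i, P b ≤ P i) :
    ∃ τ : Equiv.Perm (Fin (N + 2)), τ 0 = a ∧ τ 1 = b ∧ P ∈ ptCl (gen2 hl τ) := by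
  obtain ⟨τ, hτ⟩ := sort_lem (fun i => if i = a then 0 else if i = b then 1 else (P i).val + 2)
  have h0 : τ 0 = a := by
    have := hτ (τ 0) a (by simp)
    by_contra hne
    simp [hne] at this
    split_ifs at this
  have h1 : τ 1 = b := by
    have hb0 : τ.symm b ≠ 0 := by
      rw [Ne, Equiv.symm_apply_eq, h0]; exact hne.symm
    have h1a : τ 1 ≠ a := by
      rw [← h0]; exact fun e => by simpa using τ.injective e
    have := hτ (τ 1) b (by
      rw [Equiv.symm_apply_apply, Fin.le_def, Fin.val_one]
      have : (τ.symm b).val ≠ 0 := fun e => hb0 (Fin.ext e)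
      omega)
    by_contra hne'
    simp [hne', h1a, hne.symm] at this
  refine ⟨τ, h0, h1, fun i j h => ?_⟩
  by_cases hi : i = a
  · subst hi; exact ha j
  by_cases hi' : i = b
  · subst hi'; exact hb j
  simp only [gen2, Fin.mk_le_mk] at h
  have i0 : (τ.symm i).val ≠ 0 := fun e => hi (by
    rw [← h0, ← Equiv.symm_apply_eq]; exact Fin.ext e)
  have i1 : (τ.symm i).val ≠ 1 := fun e => hi' (by
    rw [← h1, ← Equiv.symm_apply_eq]; exact Fin.ext (by simpa using e))
  have h1 := hτ i j (by rw [Fin.le_def]; omega)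
  simp only [hi, hi', if_false] at h1
  split_ifs at h1
  · omega
  · omega
  · rw [Fin.le_def]; omega

theorem decomp_fst {N : ℕ} (τ : Equiv.Perm (Fin (N + 1))) :
    (Equiv.Perm.decomposeFin τ).1 = τ 0 := by
  conv_rhs => rw [← Equiv.symm_apply_apply Equiv.Perm.decomposeFin τ]
  exact (Equiv.Perm.decomposeFin_symm_apply_zero _ _).symm

theorem decomp_inv {N : ℕ} (τ : Equiv.Perm (Fin (N + 1))) :
    Equiv.Perm.decomposeFin.symm (τ 0, (Equiv.Perm.decomposeFin τ).2) = τ := by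
  rw [← decomp_fst]
  exact Equiv.symm_apply_apply Equiv.Perm.decomposeFin τ

theorem card1 {N : ℕ} (S : Finset (Fin (N + 1))) :
    Fintype.card {τ : Equiv.Perm (Fin (N + 1)) // τ 0 ∈ S} = S.card * N.factorial := by
  have e : {τ : Equiv.Perm (Fin (N + 1)) // τ 0 ∈ S} ≃ S × Equiv.Perm (Fin N) :=
    { toFun := fun τ => (⟨τ.1 0, τ.2⟩, (Equiv.Perm.decomposeFin τ.1).2)
      invFun := fun p => ⟨Equiv.Perm.decomposeFin.symm (p.1.1, p.2), by simp⟩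
      left_inv := fun τ => Subtype.ext (decomp_inv τ.1)
      right_inv := fun p => by
        apply Prod.ext
        · apply Subtype.ext; simp
        · simp }
  rw [Fintype.card_congr e]
  simp [Fintype.card_perm]

theorem card2_fix {N : ℕ} (s t : Fin (N + 2)) (h : s ≠ t) :
    Fintype.card {τ : Equiv.Perm (Fin (N + 2)) // τ 0 = s ∧ τ 1 = t} = N.factorial := by
  have hu : Equiv.swap 0 s t ≠ 0 := fun hu => by
    have := congrArg (Equiv.swap 0 s) hu
    rw [Equiv.swap_apply_self, Equiv.swap_apply_left] at this
    exact h this.symm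
  obtain ⟨u, hu⟩ := Fin.exists_succ_eq.2 hu
  have key : ∀ e : Equiv.Perm (Fin (N + 1)),
      Equiv.Perm.decomposeFin.symm (s, e) 1 = t ↔ e 0 = u := fun e => by
    rw [Equiv.Perm.decomposeFin_symm_apply_one]
    constructor
    · intro h
      apply Fin.succ_injective
      rw [hu, ← h, Equiv.swap_apply_self]
    · intro h
      rw [h, hu, Equiv.swap_apply_self]
  have e : {τ : Equiv.Perm (Fin (N + 2)) // τ 0 = s ∧ τ 1 = t} ≃
      {e : Equiv.Perm (Fin (N + 1)) // e 0 ∈ ({u} : Finset (Fin (N + 1)))} :=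
    { toFun := fun τ => ⟨(Equiv.Perm.decomposeFin τ.1).2, by
        have := decomp_inv τ.1
        rw [τ.2.1] at this
        rw [Finset.mem_singleton, ← key, this]; exact τ.2.2⟩
      invFun := fun e => ⟨Equiv.Perm.decomposeFin.symm (s, e.1), by simp,
        (key e.1).2 (Finset.mem_singleton.1 e.2)⟩
      left_inv := fun τ => Subtype.ext (by
        have := decomp_inv τ.1
        rw [τ.2.1] at this
        exact this)
      right_inv := fun e => Subtype.ext (by simp) }
  rw [Fintype.card_congr e, card1]
  simp

theorem card2 {N : ℕ} (S T : Finset (Fin (N + 2))) (h : Disjoint S T) :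
    Fintype.card {τ : Equiv.Perm (Fin (N + 2)) // τ 0 ∈ S ∧ τ 1 ∈ T}
      = S.card * T.card * N.factorial := by
  have e : {τ : Equiv.Perm (Fin (N + 2)) // τ 0 ∈ S ∧ τ 1 ∈ T} ≃
      Σ p : S × T, {τ : Equiv.Perm (Fin (N + 2)) // τ 0 = p.1.1 ∧ τ 1 = p.2.1} :=
    { toFun := fun τ => ⟨(⟨τ.1 0, τ.2.1⟩, ⟨τ.1 1, τ.2.2⟩), ⟨τ.1, rfl, rfl⟩⟩
      invFun := fun p => ⟨p.2.1, by rw [p.2.2.1]; exact p.1.1.2, by rw [p.2.2.2]; exact p.1.2.2⟩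
      left_inv := fun τ => rfl
      right_inv := by
        rintro ⟨⟨⟨s, hs⟩, ⟨t, ht⟩⟩, ⟨τ, h0, h1⟩⟩
        simp only at h0 h1
        subst h0 h1
        rfl }
  rw [Fintype.card_congr e, Fintype.card_sigma]
  rw [Finset.sum_congr rfl (fun p _ => card2_fix p.1.1 p.2.1 (fun e =>
    Finset.disjoint_left.1 h p.1.2 (e ▸ p.2.2)))]
  simp

/-- Let 2 ≤ n ≤ l and let (A, B) be a pair of nonempty subsets of `Fin n` with
`A ∪ B = Fin n`, `|A \ B| = k1` and `|B \ A| = k2`. Then there exist irreducible algebraic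
sets Y₁, …, Yₘ with Yᵢ ⊄ Yⱼ for all i ≠ j such that `V(A,B) = Y₁ ∪ … ∪ Yₘ` and
`m = (n − k1 − k2) · (n − 1)! + k1 · k2 · (n − 2)!`; moreover, any collection of irreducible
algebraic sets which are pairwise not contained in one another and whose union is `V(A,B)`
has exactly m members. -/
theorem stmt_9 (n l k1 k2 : ℕ) (hn : 2 ≤ n) (hnl : n ≤ l) (A B : Finset (Fin n))
    (hA : A.Nonempty) (hB : B.Nonempty) (hAB : A ∪ B = Finset.univ)
    (hk1 : (A \ B).card = k1) (hk2 : (B \ A).card = k2) :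
    ∃ (m : ℕ) (Y : Fin m → Set (Fin n → Fin l)),
      m = (n - k1 - k2) * (n - 1).factorial + k1 * k2 * (n - 2).factorial ∧
      (∀ i, IsAlgebraicSet n l (Y i) ∧ IsIrreducibleAlg n l (Y i)) ∧
      (∀ i j, i ≠ j → ¬ Y i ⊆ Y j) ∧
      (⋃ i, Y i) = solutionSet l A B hA hB ∧
      (∀ (k : ℕ) (Z : Fin k → Set (Fin n → Fin l)),
        (∀ i, IsAlgebraicSet n l (Z i) ∧ IsIrreducibleAlg n l (Z i)) →
        (∀ i j, i ≠ j → ¬ Z i ⊆ Z j) →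
        (⋃ i, Z i) = solutionSet l A B hA hB →
        k = m)
  := by
  obtain ⟨N, rfl⟩ : ∃ N, n = N + 2 := ⟨n - 2, by omega⟩
  let I := {τ : Equiv.Perm (Fin (N + 2)) // τ 0 ∈ A ∩ B} ⊕
    {τ : Equiv.Perm (Fin (N + 2)) // τ 0 ∈ A \ B ∧ τ 1 ∈ B \ A}
  let G : I → Fin (N + 2) → Fin l := Sum.elim (fun τ => gen1 hnl τ.1) (fun τ => gen2 hnl τ.1)
  have hdisj : Disjoint (A \ B) (B \ A) := disjoint_sdiff_sdiff
  have hG : ∀ i j, G i ∈ ptCl (G j) → i = j := by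
    rintro (⟨σ, hσ⟩ | ⟨σ, hσ⟩) (⟨τ, hτ⟩ | ⟨τ, hτ⟩) h
    · have := gen11 hnl σ τ h
      subst this; rfl
    · exact (gen12 hnl σ τ h).elim
    · exfalso
      have h : gen2 hnl σ ∈ ptCl (gen1 hnl τ) := h
      simp only [Finset.mem_inter, Finset.mem_sdiff] at hσ hτ
      rcases gen2_min hnl σ (τ 0) (fun j => h _ _ (by simp [gen1, Fin.le_def])) with e | e
      · rw [e] at hτ; exact hσ.1.2 hτ.2
      · rw [e] at hτ; exact hσ.2.2 hτ.1
    · have := gen22 hnl σ τ _ _ hdisj hσ hτ h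
      subst this; rfl
  have hU : (⋃ i, ptCl (G i)) = solutionSet l A B hA hB := by
    apply Set.Subset.antisymm
    · apply Set.iUnion_subset
      rintro (⟨σ, hσ⟩ | ⟨σ, hσ⟩)
      · apply ptCl_sub_sol
        rw [mem_sol_iff]
        simp only [Finset.mem_inter] at hσ
        exact ⟨σ 0, hσ.1, σ 0, hσ.2, rfl, fun i _ => by simp [G, gen1, Fin.le_def],
          fun i _ => by simp [G, gen1, Fin.le_def]⟩
      · apply ptCl_sub_sol
        rw [mem_sol_iff]
        simp only [Finset.mem_sdiff] at hσ
        exact ⟨σ 0, hσ.1.1, σ 1, hσ.2.1, by simp [G, gen2],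
          fun i _ => by simp [G, gen2, Fin.le_def], fun i _ => by simp [G, gen2, Fin.le_def]⟩
    · intro P hP
      rw [mem_sol_iff] at hP
      obtain ⟨a, ha, b, hb, hab, h1, h2⟩ := hP
      have ha' : ∀ i, P a ≤ P i := fun i => by
        have : i ∈ A ∪ B := by rw [hAB]; simp
        rcases Finset.mem_union.1 this with h | h
        · exact h1 i h
        · rw [hab]; exact h2 i h
      have hb' : ∀ i, P b ≤ P i := fun i => hab ▸ ha' i
      rw [Set.mem_iUnion]
      by_cases haB : a ∈ B
      · obtain ⟨τ, h0, h⟩ := exists_gen1 hnl P a ha'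
        exact ⟨Sum.inl ⟨τ, by rw [h0]; simp [ha, haB]⟩, h⟩
      by_cases hbA : b ∈ A
      · obtain ⟨τ, h0, h⟩ := exists_gen1 hnl P b hb'
        exact ⟨Sum.inl ⟨τ, by rw [h0]; simp [hb, hbA]⟩, h⟩
      obtain ⟨τ, h0, h1, h⟩ := exists_gen2 hnl P a b (fun e => haB (e ▸ hb)) ha' hb'
      exact ⟨Sum.inr ⟨τ, by rw [h0, h1]; simp [ha, hb, haB, hbA]⟩, h⟩
  let e := Fintype.equivFin I
  have hY1 : ∀ i, IsAlgebraicSet (N + 2) l (ptCl (G (e.symm i))) ∧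
      IsIrreducibleAlg (N + 2) l (ptCl (G (e.symm i))) := fun i => ⟨ptCl_alg _, ptCl_irr _⟩
  have hY2 : ∀ i j, i ≠ j → ¬ ptCl (G (e.symm i)) ⊆ ptCl (G (e.symm j)) := fun i j hij h =>
    hij (e.symm.injective (hG _ _ ((ptCl_sub_iff _ _).1 h)))
  have hY3 : (⋃ i, ptCl (G (e.symm i))) = solutionSet l A B hA hB := by
    rw [← hU]
    exact e.symm.surjective.iUnion_comp (fun i => ptCl (G i))
  refine ⟨Fintype.card I, fun i => ptCl (G (e.symm i)), ?_, hY1, hY2, hY3, ?_⟩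
  · have hc : (A ∩ B).card = N + 2 - k1 - k2 := by
      have c1 := Finset.card_sdiff_add_card_inter A B
      have c2 := Finset.card_sdiff_add_card B A
      rw [Finset.union_comm, hAB, Finset.card_univ, Fintype.card_fin] at c2
      omega
    rw [Fintype.card_sum, card1, card2 _ _ hdisj, hc, hk1, hk2]
    rfl
  · intro k Z hZ hZ' hZ3
    exact comp_unique _ Z hY1 hY2 hZ hZ' (hZ3.trans hY3.symm)
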